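/- Let R be a Noetherian local ring and M a nonzero finitely generated R-module. If P ∈ Supp_R M and the dimension filtration localizes (i.e., the localizations [D_i]_P of the dimension filtration of M give, after removing repetitions, the dimension filtration of M_P), and M is sequentially Cohen-Macaulay, then M_P is sequentially Cohen-Macaulay over R_P. -/

import Mathlib

open IsLocalRing

/-- The (Krull) dimension of a module: `dim_R M = dim (R / ann_R M)`;
the zero module has dimension `⊥` (i.e. `-∞`). -/
noncomputable def moduleDim (R : Type*) [CommRing R] (M : Type*) [AddCommGroup M]
    [Module R M] : WithBot ℕ∞ :=
  ringKrullDim (R ⧸ Module.annihilator R M)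

/-- `dimLe d n` means `d ≤ n` where `n : ℤ` and `d` is a dimension in `WithBot ℕ∞`
(so for `n < 0` this means `d = ⊥`, i.e. the module is zero). -/
def dimLe (d : WithBot ℕ∞) (n : ℤ) : Prop :=
  if 0 ≤ n then d ≤ ((n.toNat : ℕ∞) : WithBot ℕ∞) else d = ⊥

/-- The depth of a module over a Noetherian local ring: the supremum of lengths of
regular sequences on `M` contained in the maximal ideal. -/
noncomputable def moduleDepth (R : Type*) [CommRing R] [IsLocalRing R] (M : Type*)
    [AddCommGroup M] [Module R M] : ℕ∞ :=
  sSup {n : ℕ∞ | ∃ rs : List R, (rs.length : ℕ∞) = n ∧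
    (∀ r ∈ rs, r ∈ maximalIdeal R) ∧ RingTheory.Sequence.IsRegular M rs}

/-- A module over a Noetherian local ring is Cohen-Macaulay if it is zero or
`depth M = dim M`. -/
def IsCMModule (R : Type*) [CommRing R] [IsLocalRing R] (M : Type*) [AddCommGroup M]
    [Module R M] : Prop :=
  Nontrivial M → (moduleDepth R M : WithBot ℕ∞) = moduleDim R M

/-- A module over a (not necessarily local) commutative ring is Cohen-Macaulay if all its
localizations at primes are Cohen-Macaulay. -/
def IsCMModuleGen (R : Type*) [CommRing R] (M : Type*) [AddCommGroup M] [Module R M] : Prop :=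
  ∀ (P : Ideal R) [P.IsPrime],
    IsCMModule (Localization.AtPrime P) (LocalizedModule P.primeCompl M)

/-- `D : Fin (ℓ+1) → Submodule R M` is the dimension filtration of `M`:
`D 0 = 0`, `D ℓ = M`, the chain is strictly increasing, each `D i` (for `i ≥ 1`) is the
largest submodule of its dimension, and every nonzero submodule which is largest among
submodules of dimension at most its own dimension occurs in the chain. -/
def IsDimFiltration (R : Type*) [CommRing R] (M : Type*) [AddCommGroup M] [Module R M]
    (ℓ : ℕ) (D : Fin (ℓ + 1) → Submodule R M) : Prop :=
  D 0 = ⊥ ∧ D (Fin.last ℓ) = ⊤ ∧ StrictMono D ∧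
  (∀ i : Fin ℓ, IsGreatest
    {N : Submodule R M | moduleDim R ↥N ≤ moduleDim R ↥(D i.succ)} (D i.succ)) ∧
  (∀ N : Submodule R M, N ≠ ⊥ →
    IsGreatest {N' : Submodule R M | moduleDim R ↥N' ≤ moduleDim R ↥N} N → ∃ i, D i = N)

/-- A module over a local ring is sequentially Cohen-Macaulay if the consecutive quotients
of its dimension filtration are Cohen-Macaulay. -/
def IsSeqCM (R : Type*) [CommRing R] [IsLocalRing R] (M : Type*) [AddCommGroup M]
    [Module R M] : Prop :=
  ∃ (ℓ : ℕ) (D : Fin (ℓ + 1) → Submodule R M), IsDimFiltration R M ℓ D ∧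
    ∀ i : Fin ℓ, IsCMModule R
      (↥(D i.succ) ⧸ (D i.castSucc).comap (D i.succ).subtype)

/-- Sequentially Cohen-Macaulay over a not necessarily local ring. -/
def IsSeqCMGen (R : Type*) [CommRing R] (M : Type*) [AddCommGroup M] [Module R M] : Prop :=
  ∃ (ℓ : ℕ) (D : Fin (ℓ + 1) → Submodule R M), IsDimFiltration R M ℓ D ∧
    ∀ i : Fin ℓ, IsCMModuleGen R
      (↥(D i.succ) ⧸ (D i.castSucc).comap (D i.succ).subtype)

/-- A local ring is sequentially Cohen-Macaulay if it is so as a module over itself. -/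
def IsSeqCMRing (R : Type*) [CommRing R] [IsLocalRing R] : Prop := IsSeqCM R R

open RingTheory.Sequence in
/-- `N` admits a weakly regular sequence of length `n` consisting of elements of `I`. -/
def HasWeaklyRegularSeq {R : Type*} [CommRing R] (I : Ideal R) (N : Type*) [AddCommGroup N]
    [Module R N] (n : ℕ) : Prop :=
  ∃ rs : List R, rs.length = n ∧ (∀ r ∈ rs, r ∈ I) ∧ IsWeaklyRegular N rs

namespace HasWeaklyRegularSeq

open RingTheory.Sequence

variable {R : Type*} [CommRing R] {I : Ideal R} {N : Type*} [AddCommGroup N] [Module R N]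

lemma zero : HasWeaklyRegularSeq I N 0 := ⟨[], rfl, by simp, .nil R N⟩

lemma succ_iff {n : ℕ} : HasWeaklyRegularSeq I N (n + 1) ↔
    ∃ x ∈ I, IsSMulRegular N x ∧ HasWeaklyRegularSeq I (QuotSMulTop x N) n := by
  constructor
  · rintro ⟨_ | ⟨x, rs⟩, hl, hI, h⟩
    · simp at hl
    · rw [isWeaklyRegular_cons_iff] at h
      exact ⟨x, hI x (by simp), h.1, rs, by simpa using hl,
        fun r hr ↦ hI r (by simp [hr]), h.2⟩
  · rintro ⟨x, hx, hreg, rs, hl, hI, h⟩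
    exact ⟨x :: rs, by simp [hl], by simpa [hx] using hI, .cons hreg h⟩

/-- The first two members of a weakly regular sequence in the maximal ideal may be exchanged. -/
lemma swap [IsLocalRing R] [IsNoetherianRing R] [Module.Finite R N] {x y : R}
    (hx : x ∈ maximalIdeal R) (hy : y ∈ maximalIdeal R) (hxN : IsSMulRegular N x)
    (hyN : IsSMulRegular (QuotSMulTop x N) y) {n : ℕ}
    (h : HasWeaklyRegularSeq (maximalIdeal R) (QuotSMulTop y (QuotSMulTop x N)) n) :
    IsSMulRegular N y ∧ IsSMulRegular (QuotSMulTop y N) x ∧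
      HasWeaklyRegularSeq (maximalIdeal R) (QuotSMulTop x (QuotSMulTop y N)) n := by
  obtain ⟨rs, hl, hI, h⟩ := h
  have hp := IsLocalRing.isWeaklyRegular_of_perm_of_subset_maximalIdeal
    (IsWeaklyRegular.cons hxN (.cons hyN h)) (List.Perm.swap y x rs)
    (by rintro r (_ | ⟨_, _ | ⟨_, hr⟩⟩); exacts [hx, hy, hI r hr])
  simp only [isWeaklyRegular_cons_iff] at hp
  exact ⟨hp.1, hp.2.1, rs, hl, hI, hp.2.2⟩

end HasWeaklyRegularSeq

/-- Over a Noetherian ring, an ideal without elements regular on a finite module `N` annihilates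
a nonzero element of `N`. -/
lemma exists_isSMulRegular_or_exists_smul_eq_zero {R : Type*} [CommRing R] [IsNoetherianRing R]
    (I : Ideal R) (N : Type*) [AddCommGroup N] [Module R N] [Module.Finite R N] :
    (∃ x ∈ I, IsSMulRegular N x) ∨ ∃ u : N, u ≠ 0 ∧ ∀ r ∈ I, r • u = 0 := by
  by_contra! h
  obtain ⟨h1, h2⟩ := h
  have hsub : (I : Set R) ⊆ ⋃ q ∈ associatedPrimes R N, (q : Set R) := by
    rw [biUnion_associatedPrimes_eq_compl_regular]
    exact h1
  obtain ⟨q, hq, hIq⟩ := (Ideal.subset_union_prime_finite (associatedPrimes.finite R N)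
    (f := fun q ↦ q) 0 0 (fun _ hq _ _ ↦ hq.1)).mp hsub
  obtain ⟨hprime, u, rfl⟩ := isAssociatedPrime_iff.mp hq
  obtain ⟨r, hr, hru⟩ := h2 u (by rintro rfl; exact hprime.ne_top (by simp))
  exact hru (by simpa using hIq hr)

/-- If `x, y` are `N`-regular elements of the maximal ideal and `N / yN` has depth zero,
then so has `N / xN`. -/
lemma exists_smul_eq_zero_quotSMulTop {R : Type*} [CommRing R] [IsLocalRing R]
    {N : Type*} [AddCommGroup N] [Module R N] {x y : R} (hx : x ∈ maximalIdeal R)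
    (hxN : IsSMulRegular N x) (hyN : IsSMulRegular N y)
    (h : ∃ u : QuotSMulTop y N, u ≠ 0 ∧ ∀ r ∈ maximalIdeal R, r • u = 0) :
    ∃ u : QuotSMulTop x N, u ≠ 0 ∧ ∀ r ∈ maximalIdeal R, r • u = 0 := by
  obtain ⟨u, hu0, hu⟩ := h
  obtain ⟨u, rfl⟩ := Submodule.Quotient.mk_surjective _ u
  have key : ∀ r ∈ maximalIdeal R, ∃ w : N, y • w = r • u := fun r hr ↦ by
    have := hu r hr
    rw [← Submodule.Quotient.mk_smul, Submodule.Quotient.mk_eq_zero,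
      Submodule.mem_smul_pointwise_iff_exists] at this
    obtain ⟨w, -, hw⟩ := this
    exact ⟨w, hw⟩
  obtain ⟨v, hv⟩ := key x hx
  refine ⟨Submodule.Quotient.mk v, ?_, fun r hr ↦ ?_⟩
  · rw [ne_eq, Submodule.Quotient.mk_eq_zero, Submodule.mem_smul_pointwise_iff_exists] at hu0 ⊢
    rintro ⟨t, -, rfl⟩
    rw [smul_comm] at hv
    exact hu0 ⟨t, trivial, hxN hv⟩
  · obtain ⟨w, hw⟩ := key r hr
    rw [← Submodule.Quotient.mk_smul, Submodule.Quotient.mk_eq_zero,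
      Submodule.mem_smul_pointwise_iff_exists]
    refine ⟨w, trivial, hyN ?_⟩
    change y • x • w = y • r • v
    rw [smul_comm y x, hw, smul_comm y r, hv, smul_comm]

section Local

open scoped Pointwise

variable {R : Type*} [CommRing R] [IsNoetherianRing R] [IsLocalRing R]

/-- Dividing by different regular elements of the maximal ideal yields modules admitting
weakly regular sequences of the same lengths. -/
lemma HasWeaklyRegularSeq.exchange {n : ℕ} {N : Type*} [AddCommGroup N] [Module R N]
    [Module.Finite R N] {x y : R} (hx : x ∈ maximalIdeal R) (hy : y ∈ maximalIdeal R)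
    (hxN : IsSMulRegular N x) (hyN : IsSMulRegular N y)
    (h : HasWeaklyRegularSeq (maximalIdeal R) (QuotSMulTop x N) n) :
    HasWeaklyRegularSeq (maximalIdeal R) (QuotSMulTop y N) n := by
  induction n generalizing N x y with
  | zero => exact .zero
  | succ n ih =>
    obtain ⟨z', hz', hz'N, h⟩ := succ_iff.mp h
    have hdepth : ¬ ∃ u : QuotSMulTop x N, u ≠ 0 ∧ ∀ r ∈ maximalIdeal R, r • u = 0 := by
      rintro ⟨u, hu0, hu⟩
      exact hu0 (hz'N.right_eq_zero_of_smul (hu z' hz'))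
    obtain ⟨z, hz, hzN⟩ : ∃ z ∈ maximalIdeal R,
        IsSMulRegular (QuotSMulTop x N × QuotSMulTop y N) z := by
      refine (exists_isSMulRegular_or_exists_smul_eq_zero _ _).resolve_right ?_
      rintro ⟨⟨u, v⟩, huv, h0⟩
      simp only [Prod.smul_mk, Prod.mk_eq_zero, ne_eq] at huv h0
      by_cases hu : u = 0
      · exact hdepth (exists_smul_eq_zero_quotSMulTop hx hxN hyN
          ⟨v, fun hv ↦ huv ⟨hu, hv⟩, fun r hr ↦ (h0 r hr).2⟩)
      · exact hdepth ⟨u, hu, fun r hr ↦ (h0 r hr).1⟩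
    obtain ⟨hzx, hzy⟩ := Prod.isSMulRegular_iff.mp hzN
    obtain ⟨hz0, hxz, h1⟩ := swap hx hz hxN hzx (ih hz' hz hz'N hzx h)
    obtain ⟨-, hyz, -⟩ := swap hy hz hyN hzy zero
    exact succ_iff.mpr ⟨z, hz, hzy, (swap hz hy hz0 hyz (ih hx hy hxz hyz h1)).2.2⟩

/-- The length of a weakly regular sequence in the maximal ideal is bounded by the coheight of
every prime annihilating a nonzero element. -/
lemma HasWeaklyRegularSeq.le_coheight {n : ℕ} {N : Type*} [AddCommGroup N] [Module R N]
    [Module.Finite R N] (h : HasWeaklyRegularSeq (maximalIdeal R) N n) (q : PrimeSpectrum R)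
    (hq : ∃ u : N, u ≠ 0 ∧ ∀ r ∈ q.asIdeal, r • u = 0) : n ≤ Order.coheight q := by
  induction n generalizing N q with
  | zero => simp
  | succ n ih =>
    obtain ⟨x, hx, hxN, h⟩ := succ_iff.mp h
    obtain ⟨u, hu0, hu⟩ := hq
    let U : Submodule R N := Submodule.torsionBySet R N q.asIdeal
    have hU : ¬ U ≤ x • (⊤ : Submodule R N) := by
      intro hle
      have hle' : U ≤ x • U := fun w hw ↦ by
        obtain ⟨v, -, rfl⟩ := (Submodule.mem_smul_pointwise_iff_exists _ _ _).mp (hle hw)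
        refine (Submodule.mem_smul_pointwise_iff_exists _ _ _).mpr ⟨v, ?_, rfl⟩
        rw [Submodule.mem_torsionBySet_iff] at hw ⊢
        exact fun a ↦ hxN.right_eq_zero_of_smul (by rw [smul_comm]; exact hw a)
      have hbot : U = ⊥ := by
        refine Submodule.eq_bot_of_le_smul_of_le_jacobson_bot (Ideal.span {x}) U
          (IsNoetherian.noetherian U) (by rwa [Submodule.ideal_span_singleton_smul]) ?_
        rw [IsLocalRing.jacobson_eq_maximalIdeal ⊥ bot_ne_top]
        simpa [Ideal.span_le] using hx
      have huU : u ∈ U := by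
        rw [Submodule.mem_torsionBySet_iff]
        exact fun a ↦ hu a a.2
      exact hu0 (by simpa [hbot] using huU)
    obtain ⟨w, hwU, hw⟩ := SetLike.not_le_iff_exists.mp hU
    rw [Submodule.mem_torsionBySet_iff] at hwU
    obtain ⟨q', hq', hle⟩ := exists_le_isAssociatedPrime_of_isNoetherianRing R
      (Submodule.Quotient.mk w : QuotSMulTop x N)
      (by rwa [ne_eq, Submodule.Quotient.mk_eq_zero])
    obtain ⟨hprime, v, hv⟩ := isAssociatedPrime_iff.mp hq'
    have hxq' : x ∈ q' := hle (by
      rw [Submodule.mem_colon_singleton, Submodule.mem_bot, ← Submodule.Quotient.mk_smul,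
        Submodule.Quotient.mk_eq_zero]
      exact Submodule.smul_mem_pointwise_smul _ _ _ trivial)
    have hlt : q < ⟨q', hprime⟩ := by
      refine lt_of_le_of_ne (fun r hr ↦ hle ?_) ?_
      · rw [Submodule.mem_colon_singleton, Submodule.mem_bot, ← Submodule.Quotient.mk_smul,
          hwU ⟨r, hr⟩, Submodule.Quotient.mk_zero]
      · rintro rfl
        exact hu0 (hxN.right_eq_zero_of_smul (hu x hxq'))
    have := ih h ⟨q', hprime⟩ ⟨v, by rintro rfl; exact hprime.ne_top (by simp [hv]),
      fun r hr ↦ by simpa [hv] using hr⟩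
    push_cast
    exact (add_le_add_left this 1).trans (Order.coheight_add_one_le hlt)

/-- If `N` admits a weakly regular sequence of length `n`, then every prime `P` contains a weakly
regular sequence of length at least `n - dim R / P`. -/
lemma HasWeaklyRegularSeq.exists_le_coheight_add {n : ℕ} {N : Type*} [AddCommGroup N]
    [Module R N] [Module.Finite R N] (h : HasWeaklyRegularSeq (maximalIdeal R) N n)
    (P : PrimeSpectrum R) :
    ∃ e : ℕ, HasWeaklyRegularSeq P.asIdeal N e ∧ (n : ℕ∞) ≤ Order.coheight P + e := by
  induction n generalizing N with
  | zero => exact ⟨0, .zero, by simp⟩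
  | succ n ih =>
    rcases exists_isSMulRegular_or_exists_smul_eq_zero P.asIdeal N with ⟨y, hy, hyN⟩ | hu
    · obtain ⟨x, hx, hxN, h'⟩ := succ_iff.mp h
      obtain ⟨e, he, hle⟩ :=
        ih (exchange hx (le_maximalIdeal P.2.ne_top hy) hxN hyN h')
      refine ⟨e + 1, succ_iff.mpr ⟨y, hy, hyN, he⟩, ?_⟩
      push_cast
      rw [← add_assoc]
      exact add_le_add_left hle 1
    · exact ⟨0, .zero, by simpa using h.le_coheight P hu⟩

end Local

section Dimension

variable {R : Type*} [CommRing R]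

lemma moduleDim_eq_supportDim (N : Type*) [AddCommGroup N] [Module R N] [Module.Finite R N] :
    moduleDim R N = Module.supportDim R N :=
  (Module.supportDim_eq_ringKrullDim_quotient_annihilator R N).symm

/-- A chain in `s` starting in an upper set `t` of primes is a chain in `t`. -/
lemma length_le_krullDim_of_head_mem {s t : Set (PrimeSpectrum R)} (ht : IsUpperSet t)
    (p : LTSeries s) (h : (p.head : PrimeSpectrum R) ∈ t) :
    ((p.length : ℕ) : WithBot ℕ∞) ≤ Order.krullDim t :=
  Order.LTSeries.length_le_krullDim
    { length := p.length
      toFun := fun i ↦ ⟨p i, ht (p.monotone (Fin.zero_le i)) h⟩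
      step := p.step : LTSeries t }

/-- The dimension of a module is bounded by the larger one of the dimensions of two modules whose
supports cover its support. -/
lemma supportDim_le_max {A B C : Type*} [AddCommGroup A] [Module R A] [AddCommGroup B]
    [Module R B] [AddCommGroup C] [Module R C]
    (h : Module.support R B ⊆ Module.support R A ∪ Module.support R C) :
    Module.supportDim R B ≤ max (Module.supportDim R A) (Module.supportDim R C) := by
  refine iSup_le fun p ↦ ?_
  rcases h p.head.2 with hp | hp
  · exact (length_le_krullDim_of_head_mem (fun _ _ ↦ Module.mem_support_mono) p hp).trans
      (le_max_left _ _)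
  · exact (length_le_krullDim_of_head_mem (fun _ _ ↦ Module.mem_support_mono) p hp).trans
      (le_max_right _ _)

/-- The dimension of the localization of a module at a prime `P` is at most its dimension minus
the dimension of `R / P`. -/
lemma supportDim_add_coheight_le (S : Type*) [CommRing S] [Algebra R S] (P : Ideal R)
    [hP : P.IsPrime] [IsLocalization.AtPrime S P] {N N' : Type*} [AddCommGroup N] [Module R N]
    [AddCommGroup N'] [Module R N'] [Module S N'] [IsScalarTower R S N'] (f : N →ₗ[R] N')
    [IsLocalizedModule P.primeCompl f] :
    Module.supportDim S N' + (Order.coheight (⟨P, hP⟩ : PrimeSpectrum R) : ℕ∞) ≤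
      Module.supportDim R N := by
  cases subsingleton_or_nontrivial N' with
  | inl h => simp [(Module.supportDim_eq_bot_iff_subsingleton (R := S) (M := N')).mpr h]
  | inr h =>
    have hmem : (⟨P, hP⟩ : PrimeSpectrum R) ∈ Module.support R N := by
      have := (IsLocalizedModule.iso P.primeCompl f).toEquiv.nontrivial
      exact this
    let P' : Module.support R N := ⟨_, hmem⟩
    have : Nonempty (Module.support R N) := ⟨P'⟩
    have h1 : Module.supportDim S N' ≤ (Order.height P' : ℕ∞) := by
      rw [Order.height_eq_krullDim_Iic]
      have hsupp (q : Module.support S N') :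
          PrimeSpectrum.comap (algebraMap R S) q ∈ Module.support R N := by
        obtain ⟨m, hm⟩ := Module.mem_support_iff'.mp q.2
        obtain ⟨⟨n, s⟩, hs⟩ := IsLocalizedModule.surj P.primeCompl f m
        refine Module.mem_support_iff'.mpr ⟨n, fun r hr h0 ↦ ?_⟩
        have hu : algebraMap R S s ∉ q.1.asIdeal := fun hmem ↦
          q.1.2.ne_top (Ideal.eq_top_of_isUnit_mem _ hmem (IsLocalization.map_units S s))
        refine hm (algebraMap R S (r * s)) (by
          rw [map_mul]
          exact fun hmem ↦ (q.1.2.mem_or_mem hmem).elim hr hu) ?_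
        rw [algebraMap_smul, mul_smul]
        simp only [Submonoid.smul_def] at hs
        rw [hs, ← map_smul, h0, map_zero]
      have hle (q : PrimeSpectrum S) : PrimeSpectrum.comap (algebraMap R S) q ≤ ⟨P, hP⟩ := by
        intro r hr
        by_contra hrP
        exact q.2.ne_top (Ideal.eq_top_of_isUnit_mem _ hr
          (IsLocalization.map_units S (⟨r, hrP⟩ : P.primeCompl)))
      refine Order.krullDim_le_of_strictMono
        (fun q ↦ (⟨⟨_, hsupp q⟩, hle q⟩ : Set.Iic P')) fun q q' hqq' ↦ ?_
      refine lt_of_le_of_ne (fun r hr ↦ hqq'.le hr) fun heq ↦ hqq'.ne (Subtype.ext ?_)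
      exact PrimeSpectrum.localization_comap_injective S P.primeCompl
        (congrArg (fun z : Set.Iic P' ↦ (z.1 : PrimeSpectrum R)) heq)
    have h2 : Order.coheight (⟨P, hP⟩ : PrimeSpectrum R) ≤ Order.coheight P' := by
      rw [← WithBot.coe_le_coe, Order.coheight_eq_krullDim_Ici, Order.coheight_eq_krullDim_Ici]
      exact Order.krullDim_le_of_strictMono
        (fun q ↦ (⟨⟨q, Module.mem_support_mono q.2 hmem⟩, q.2⟩ : Set.Ici P')) fun _ _ hlt ↦ hlt
    calc _ ≤ ((Order.height P' + Order.coheight P' : ℕ∞) : WithBot ℕ∞) := by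
          rw [WithBot.coe_add]
          exact add_le_add h1 (WithBot.coe_le_coe.mpr h2)
      _ ≤ _ := by
          rw [Module.supportDim, Order.krullDim_eq_iSup_height_add_coheight_of_nonempty]
          exact WithBot.coe_le_coe.mpr
            (le_iSup (fun a : Module.support R N ↦ Order.height a + Order.coheight a) P')

end Dimension

section CohenMacaulay

open RingTheory.Sequence

variable {R : Type*} [CommRing R] [IsNoetherianRing R] [IsLocalRing R]
  {N : Type*} [AddCommGroup N] [Module R N] [Module.Finite R N]

lemma length_le_supportDim [Nontrivial N] {rs : List R} (h : IsRegular N rs) :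
    ((rs.length : ℕ) : WithBot ℕ∞) ≤ Module.supportDim R N := by
  rw [← Module.supportDim_add_length_eq_supportDim_of_isRegular rs h]
  have : Nontrivial (N ⧸ Ideal.ofList rs • (⊤ : Submodule R N)) :=
    Submodule.Quotient.nontrivial_iff.mpr h.2.symm
  obtain ⟨d, hd⟩ := WithBot.ne_bot_iff_exists.mp
    (Module.supportDim_ne_bot_of_nontrivial R (N ⧸ Ideal.ofList rs • (⊤ : Submodule R N)))
  rw [← hd]
  exact_mod_cast le_add_self

lemma moduleDepth_le_supportDim [Nontrivial N] :
    (moduleDepth R N : WithBot ℕ∞) ≤ Module.supportDim R N := by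
  obtain ⟨d, hd⟩ := WithBot.ne_bot_iff_exists.mp (Module.supportDim_ne_bot_of_nontrivial R N)
  rw [← hd, WithBot.coe_le_coe]
  refine sSup_le ?_
  rintro _ ⟨rs, rfl, -, h⟩
  rw [← WithBot.coe_le_coe, hd]
  exact length_le_supportDim h

/-- A nonzero Cohen-Macaulay module of dimension `n` admits a weakly regular sequence of
length `n` in the maximal ideal. -/
lemma IsCMModule.exists_hasWeaklyRegularSeq [Nontrivial N] (h : IsCMModule R N) :
    ∃ n : ℕ, Module.supportDim R N = n ∧ HasWeaklyRegularSeq (maximalIdeal R) N n := by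
  have hdim := (h ‹_›).trans (moduleDim_eq_supportDim N)
  have hlt : moduleDepth R N < ⊤ := by
    rw [← WithBot.coe_lt_coe, hdim]
    exact (Module.supportDim_le_ringKrullDim R N).trans_lt ringKrullDim_lt_top
  have : Nonempty {n : ℕ∞ | ∃ rs : List R, (rs.length : ℕ∞) = n ∧
      (∀ r ∈ rs, r ∈ maximalIdeal R) ∧ IsRegular N rs} :=
    ⟨⟨0, [], by simp, by simp, .nil R N⟩⟩
  obtain ⟨rs, hl, hmem, hrs⟩ := ENat.sSup_mem_of_nonempty_of_lt_top hlt
  refine ⟨rs.length, ?_, rs, rfl, hmem, hrs.1⟩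
  rw [← hdim]
  exact congrArg _ hl.symm

/-- The localization of a Cohen-Macaulay module `N` at a prime `P` in its support is
Cohen-Macaulay, of dimension `dim N - dim R / P`. -/
lemma IsCMModule.of_isLocalizedModule (h : IsCMModule R N)
    (S : Type*) [CommRing S] [Algebra R S] [IsLocalRing S] [IsNoetherianRing S] (P : Ideal R)
    [hP : P.IsPrime] [IsLocalization.AtPrime S P] {N' : Type*}
    [AddCommGroup N'] [Module R N'] [Module S N'] [IsScalarTower R S N'] [Module.Finite S N']
    [Nontrivial N'] (f : N →ₗ[R] N') [IsLocalizedModule P.primeCompl f] :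
    IsCMModule S N' ∧ Module.supportDim R N ≤
      Module.supportDim S N' + (Order.coheight (⟨P, hP⟩ : PrimeSpectrum R) : ℕ∞) := by
  have : Nontrivial N := by
    have := (IsLocalizedModule.iso P.primeCompl f).toEquiv.nontrivial
    exact Module.nonempty_support_iff.mp ⟨⟨P, hP⟩, this⟩
  obtain ⟨n, hn, hseq⟩ := h.exists_hasWeaklyRegularSeq
  obtain ⟨e, ⟨rs, rfl, hmem, hreg⟩, hle⟩ := hseq.exists_le_coheight_add ⟨P, hP⟩
  have hreg' := hreg.isRegular_of_isLocalizedModule_of_mem S P f hmem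
  have hdepth : (rs.length : ℕ∞) ≤ moduleDepth S N' := by
    refine le_sSup ⟨_, by simp, fun r hr ↦ ?_, hreg'⟩
    obtain ⟨r, hr', rfl⟩ := List.mem_map.mp hr
    exact (IsLocalization.AtPrime.to_map_mem_maximal_iff S P r).mpr (hmem r hr')
  have hupper := supportDim_add_coheight_le S P f
  have hdd := moduleDepth_le_supportDim (R := S) (N := N')
  obtain ⟨d, hd⟩ := WithBot.ne_bot_iff_exists.mp (Module.supportDim_ne_bot_of_nontrivial S N')
  rw [IsCMModule, moduleDim_eq_supportDim, ← hd, hn]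
  rw [← hd] at hupper hdd
  rw [hn] at hupper
  have hupper' : d + Order.coheight (⟨P, hP⟩ : PrimeSpectrum R) ≤ (n : ℕ∞) := by
    exact_mod_cast hupper
  have hdd' : moduleDepth S N' ≤ d := by exact_mod_cast hdd
  have hde : d ≤ rs.length := by
    have hc : Order.coheight (⟨P, hP⟩ : PrimeSpectrum R) ≠ ⊤ :=
      ((le_add_self.trans hupper').trans_lt (ENat.natCast_lt_top n)).ne
    rw [add_comm] at hupper'
    exact (ENat.add_le_add_iff_left hc).mp (hupper'.trans hle)
  constructor
  · intro _
    exact congrArg _ (le_antisymm hdd' (hde.trans hdepth))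
  · have : (n : ℕ∞) ≤ d + Order.coheight (⟨P, hP⟩ : PrimeSpectrum R) := by
      refine hle.trans ?_
      rw [add_comm]
      gcongr
      exact hdepth.trans hdd'
    exact_mod_cast this

end CohenMacaulay

section LocalizedQuotient

variable {R : Type*} [CommRing R] {M : Type*} [AddCommGroup M] [Module R M]
  (S : Type*) [CommRing S] [Algebra R S] {M' : Type*} [AddCommGroup M'] [Module R M']
  [Module S M'] [IsScalarTower R S M']

lemma comap_subtype_localized' (p : Submonoid R) [IsLocalization p S] (f : M →ₗ[R] M')
    [IsLocalizedModule p f] (A B : Submodule R M) :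
    (A.comap B.subtype).localized' S p (B.toLocalized' S p f) =
      (A.localized' S p f).comap (B.localized' S p f).subtype := by
  ext y
  simp only [Submodule.mem_localized', Submodule.mem_comap, Submodule.subtype_apply]
  constructor
  · rintro ⟨b, hb, s, rfl⟩
    refine ⟨b, hb, s, ?_⟩
    rw [IsLocalizedModule.mk'_eq_iff]
    exact congrArg Subtype.val (IsLocalizedModule.mk'_cancel' (B.toLocalized' S p f) b s).symm
  · rintro ⟨a, ha, s, hs⟩
    obtain ⟨⟨b, t⟩, hbt⟩ := IsLocalizedModule.surj p (B.toLocalized' S p f) y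
    have hbt' : t • (y : M') = f b := congrArg Subtype.val hbt
    rw [← hs, ← IsLocalizedModule.mk'_smul, IsLocalizedModule.mk'_eq_iff,
      ← LinearMap.map_smul_of_tower] at hbt'
    obtain ⟨c, hc⟩ := IsLocalizedModule.exists_of_eq (S := p) hbt'
    refine ⟨c • s • b, ?_, c * s * t, ?_⟩
    · have : c • s • (b : M) ∈ A := by
        rw [← hc]
        exact A.smul_mem _ (A.smul_mem _ ha)
      exact this
    · rw [IsLocalizedModule.mk'_eq_iff, mul_smul, hbt, mul_smul,
        LinearMap.map_smul_of_tower, LinearMap.map_smul_of_tower]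

/-- If `B / A` is Cohen-Macaulay, then so is its localization `B_P / A_P` at a prime `P`, whose
dimension is `dim B / A - dim R / P` provided that it is nonzero. -/
lemma IsCMModule.localized_quotient [IsNoetherianRing R] [IsLocalRing R] [Module.Finite R M]
    [IsLocalRing S] [IsNoetherianRing S] (P : Ideal R) [hP : P.IsPrime]
    [IsLocalization.AtPrime S P] [Module.Finite S M'] (f : M →ₗ[R] M')
    [IsLocalizedModule P.primeCompl f] {A B : Submodule R M}
    (hAB : ¬ B.localized' S P.primeCompl f ≤ A.localized' S P.primeCompl f)
    (h : IsCMModule R (B ⧸ A.comap B.subtype)) :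
    IsCMModule S (B.localized' S P.primeCompl f ⧸
      (A.localized' S P.primeCompl f).comap (B.localized' S P.primeCompl f).subtype) ∧
    Module.supportDim R (B ⧸ A.comap B.subtype) ≤
      Module.supportDim S (B.localized' S P.primeCompl f ⧸
        (A.localized' S P.primeCompl f).comap (B.localized' S P.primeCompl f).subtype) +
        (Order.coheight (⟨P, hP⟩ : PrimeSpectrum R) : ℕ∞) := by
  have hne : (A.localized' S P.primeCompl f).comap (B.localized' S P.primeCompl f).subtype ≠ ⊤ :=
    fun htop ↦ hAB (Submodule.comap_subtype_eq_top.mp htop)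
  rw [← comap_subtype_localized'] at hne ⊢
  have := Submodule.Quotient.nontrivial_iff.mpr hne
  exact h.of_isLocalizedModule S P ((A.comap B.subtype).toLocalizedQuotient' S P.primeCompl
    (B.toLocalized' S P.primeCompl f))

end LocalizedQuotient

/-- Every member of a dimension filtration occurs in every other dimension filtration. -/
lemma IsDimFiltration.exists_eq {R : Type*} [CommRing R] {M : Type*} [AddCommGroup M] [Module R M]
    {ℓ : ℕ} {D : Fin (ℓ + 1) → Submodule R M} (hD : IsDimFiltration R M ℓ D)
    {ℓ₀ : ℕ} {D₀ : Fin (ℓ₀ + 1) → Submodule R M}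
    (hD₀ : IsDimFiltration R M ℓ₀ D₀) (i : Fin (ℓ + 1)) : ∃ i₀, D₀ i₀ = D i := by
  cases i using Fin.cases with
  | zero => exact ⟨0, hD₀.1.trans hD.1.symm⟩
  | succ i =>
    refine hD₀.2.2.2.2 _ ?_ (hD.2.2.2.1 i)
    rw [← hD.1]
    exact (hD.2.2.1 (Fin.succ_pos i)).ne'

section DimFiltration

variable {R : Type*} [CommRing R] [IsNoetherianRing R] {M : Type*} [AddCommGroup M] [Module R M]
  [Module.Finite R M]

lemma moduleDim_mono {A B : Submodule R M} (h : A ≤ B) : moduleDim R A ≤ moduleDim R B := by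
  rw [moduleDim_eq_supportDim, moduleDim_eq_supportDim]
  exact Module.supportDim_le_of_injective _ (Submodule.inclusion_injective h)

lemma moduleDim_sup_le (A B : Submodule R M) :
    moduleDim R ↥(A ⊔ B) ≤ max (moduleDim R A) (moduleDim R B) := by
  simp only [moduleDim_eq_supportDim]
  refine supportDim_le_max fun q hq ↦ ?_
  rw [Set.mem_union]
  simp only [Module.mem_support_iff_of_finite] at hq ⊢
  refine q.2.inf_le.mp (le_trans (fun r hr ↦ ?_) hq)
  refine Submodule.mem_annihilator.mpr fun x hx ↦ ?_
  obtain ⟨a, ha, b, hb, rfl⟩ := Submodule.mem_sup.mp hx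
  rw [smul_add, Submodule.mem_annihilator.mp hr.1 a ha, Submodule.mem_annihilator.mp hr.2 b hb,
    add_zero]

/-- Every submodule `F` is contained in one which is largest among the submodules of dimension at
most `dim F`. -/
lemma exists_isGreatest_moduleDim_le (F : Submodule R M) :
    ∃ E : Submodule R M, F ≤ E ∧ moduleDim R E = moduleDim R F ∧
      IsGreatest {N : Submodule R M | moduleDim R N ≤ moduleDim R E} E := by
  obtain ⟨E, hE, hmax⟩ := WellFounded.has_min (wellFounded_gt (α := Submodule R M))
    {N : Submodule R M | moduleDim R N ≤ moduleDim R F} ⟨F, le_refl (moduleDim R F)⟩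
  have hgreatest (N : Submodule R M) (hN : moduleDim R N ≤ moduleDim R F) : N ≤ E := by
    by_contra hNE
    exact hmax (E ⊔ N) ((moduleDim_sup_le E N).trans (max_le hE hN)) (left_lt_sup.mpr hNE)
  have hFE := hgreatest F le_rfl
  exact ⟨E, hFE, le_antisymm hE (moduleDim_mono hFE), le_refl (moduleDim R E),
    fun N hN ↦ hgreatest N (le_trans hN hE)⟩

lemma moduleDim_le_max_quotient (A B : Submodule R M) :
    moduleDim R B ≤ max (moduleDim R A) (moduleDim R (B ⧸ A.comap B.subtype)) := by
  simp only [moduleDim_eq_supportDim]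
  refine (supportDim_le_max (Module.support_of_exact (f := (A.comap B.subtype).subtype)
    (g := (A.comap B.subtype).mkQ) (LinearMap.exact_subtype_mkQ _) (Submodule.subtype_injective _)
    (Submodule.mkQ_surjective _)).subset).trans (max_le_max_right _ ?_)
  exact Module.supportDim_le_of_injective
    ((B.subtype.comp (A.comap B.subtype).subtype).codRestrict A fun x ↦ x.2) fun x y hxy ↦
      Subtype.ext (Subtype.ext (congrArg (fun z : A ↦ (z : M)) hxy))

namespace IsDimFiltration

variable {ℓ : ℕ} {D : Fin (ℓ + 1) → Submodule R M}

lemma moduleDim_strictMono (hD : IsDimFiltration R M ℓ D) :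
    StrictMono fun i ↦ moduleDim R (D i) := by
  intro i j hij
  by_contra! hle
  have hlt := hD.2.2.1 hij
  cases i using Fin.cases with
  | zero =>
    have : Subsingleton (D 0) := Submodule.subsingleton_iff_eq_bot.mpr hD.1
    rw [hD.1] at hlt
    simp only [moduleDim_eq_supportDim] at hle
    rw [Module.supportDim_eq_bot_of_subsingleton R (D 0), le_bot_iff,
      Module.supportDim_eq_bot_iff_subsingleton, Submodule.subsingleton_iff_eq_bot] at hle
    exact hlt.ne' hle
  | succ i => exact hlt.not_ge ((hD.2.2.2.1 i).2 hle)

end IsDimFiltration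

end DimFiltration

/-- Over a Noetherian local ring, if `P ∈ Supp_R M`, the dimension filtration
of `M` localizes to the dimension filtration of `M_P` (after removing repetitions), and `M`
is sequentially Cohen-Macaulay, then `M_P` is sequentially Cohen-Macaulay over `R_P`. -/
theorem stmt14 (R : Type*) [CommRing R] [IsNoetherianRing R] [IsLocalRing R]
    (M : Type*) [AddCommGroup M] [Module R M] [Module.Finite R M] [Nontrivial M]
    (P : Ideal R) (hP : P.IsPrime) (hPsupp : ⟨P, hP⟩ ∈ Module.support R M)
    (ℓ : ℕ) (D : Fin (ℓ + 1) → Submodule R M) (hD : IsDimFiltration R M ℓ D)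
    (hloc : ∃ (ℓ' : ℕ)
      (D' : Fin (ℓ' + 1) → Submodule (Localization.AtPrime P) (LocalizedModule P.primeCompl M)),
      IsDimFiltration (Localization.AtPrime P) (LocalizedModule P.primeCompl M) ℓ' D' ∧
      ∀ j, ∃ i, D' j = (D i).localized P.primeCompl)
    (hM : IsSeqCM R M) :
    IsSeqCM (Localization.AtPrime P) (LocalizedModule P.primeCompl M) := by
  obtain ⟨ℓ', D', hD', hloc⟩ := hloc
  obtain ⟨ℓ₀, D₀, hD₀, hCM⟩ := hM
  have hrange (j) : ∃ i, D' j = (D₀ i).localized P.primeCompl := by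
    obtain ⟨i, hi⟩ := hloc j
    obtain ⟨i₀, hi₀⟩ := hD.exists_eq hD₀ i
    exact ⟨i₀, by rw [hi, hi₀]⟩
  have hmono : Monotone fun i ↦ (D₀ i).localized P.primeCompl := fun i j hij ↦
    (Submodule.localized'gi (Localization P.primeCompl) P.primeCompl
      (LocalizedModule.mkLinearMap P.primeCompl M)).gc.monotone_l (hD₀.2.2.1.monotone hij)
  refine ⟨ℓ', D', hD', fun j ↦ ?_⟩
  obtain ⟨b, hb, hmin⟩ := WellFounded.has_min (wellFounded_lt (α := Fin (ℓ₀ + 1)))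
    {b | D' j.succ = (D₀ b).localized P.primeCompl} (hrange _)
  have hb0 : b ≠ 0 := by
    rintro rfl
    have hb' : D' j.succ = ⊥ := by
      rw [hb, hD₀.1]
      exact Submodule.localized'_bot _ _ _
    rw [← hD'.1] at hb'
    exact (hD'.2.2.1 (Fin.succ_pos j)).ne' hb'
  obtain ⟨c, rfl⟩ := Fin.exists_succ_eq.mpr hb0
  have hF : ¬ (D₀ c.succ).localized P.primeCompl ≤ (D₀ c.castSucc).localized P.primeCompl :=
    fun hle ↦ hmin c.castSucc (hb.trans (hle.antisymm (hmono c.castSucc_lt_succ.le)))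
      c.castSucc_lt_succ
  obtain ⟨hCM', hdim⟩ := (hCM c).localized_quotient (Localization.AtPrime P) P
    (LocalizedModule.mkLinearMap P.primeCompl M) hF
  have hdimF : moduleDim (Localization.AtPrime P) ((D₀ c.castSucc).localized P.primeCompl) <
      moduleDim (Localization.AtPrime P) (D' j.succ) := by
    by_contra! hle
    have hlt := hD₀.moduleDim_strictMono c.castSucc_lt_succ
    have hle' := (le_max_iff.mp (moduleDim_le_max_quotient (D₀ c.castSucc)
      (D₀ c.succ))).resolve_left hlt.not_ge
    have hF' := supportDim_add_coheight_le (Localization.AtPrime P) P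
      ((D₀ c.castSucc).toLocalized P.primeCompl)
    simp only [moduleDim_eq_supportDim] at hle hlt hle'
    refine (hlt.trans_le (hle'.trans (hdim.trans (le_trans ?_ hF')))).false
    gcongr
    refine le_trans ?_ hle
    rw [hb]
    exact Module.supportDim_le_of_surjective _ (Submodule.mkQ_surjective _)
  have hEq : D' j.castSucc = (D₀ c.castSucc).localized P.primeCompl := by
    apply le_antisymm
    · obtain ⟨a, ha⟩ := hrange j.castSucc
      rw [ha]
      refine hmono (Fin.le_castSucc_iff.mpr ?_)
      by_contra! hca
      refine (hD'.2.2.1 j.castSucc_lt_succ).not_ge ?_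
      rw [ha, hb]
      exact hmono hca
    · by_cases hbot : (D₀ c.castSucc).localized P.primeCompl = ⊥
      · rw [hbot]
        exact bot_le
      obtain ⟨E, hFE, hdimE, hE⟩ :=
        exists_isGreatest_moduleDim_le ((D₀ c.castSucc).localized P.primeCompl)
      obtain ⟨k, rfl⟩ := hD'.2.2.2.2 E (fun h ↦ hbot (le_bot_iff.mp (h ▸ hFE))) hE
      refine hFE.trans (hD'.2.2.1.monotone (Fin.le_castSucc_iff.mpr ?_))
      rw [← hdimE] at hdimF
      exact hD'.moduleDim_strictMono.lt_iff_lt.mp hdimF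
  rw [hEq, hb]
  exact hCM'
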